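/- arXiv:2507.07565 — 4 statements merged into one kernel-verified Lean document; each statement's English description precedes it below -/
import Mathlib

section
/- Let K ≥ 2 and L ≥ 1 be integers. There exists a real K × L matrix A such that (i) every row of A has at least one nonzero entry, (ii) every column of A sums to zero, and (iii) the rank of A equals K − 1, if and only if L ≥ K − 1. -/
open Finset

/-- **Existence condition for secure generator matrices.**
For integers `K ≥ 2` and `L ≥ 1`, there exists a real `K × L` matrix `A` such that
(i) every row has at least one nonzero entry, (ii) every column sums to zero, and
(iii) `rank A = K - 1`, if and only if `L ≥ K - 1`. -/
theorem exists_secure_generator_iff (K L : ℕ) (hK : 2 ≤ K) (hL : 1 ≤ L) :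
    (∃ A : Matrix (Fin K) (Fin L) ℝ,
      (∀ k, ∃ l, A k l ≠ 0) ∧
      (∀ l, ∑ k, A k l = 0) ∧
      A.rank = K - 1) ↔ L ≥ K - 1 := by
  constructor
  · rintro ⟨A, -, -, h⟩
    have := A.rank_le_width
    omega
  · intro h
    obtain ⟨n, rfl⟩ : ∃ n, K = n + 1 := ⟨K - 1, by omega⟩
    simp only [Nat.add_sub_cancel] at h ⊢
    let e : Fin n → Fin L := Fin.castLE h
    have he : Function.Injective e := Fin.castLE_injective h
    let C : Matrix (Fin n) (Fin L) ℝ := Matrix.of fun i l => if e i = l then 1 else 0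
    let B : Matrix (Fin (n+1)) (Fin n) ℝ :=
      Matrix.of fun k i => if k = 0 then -1 else if k = i.succ then 1 else 0
    let B' : Matrix (Fin n) (Fin (n+1)) ℝ := Matrix.of fun i k => if k = i.succ then 1 else 0
    have hB : B' * B = 1 := by
      ext i j
      simp only [B, B', Matrix.mul_apply, Matrix.one_apply, Matrix.of_apply, ite_mul, one_mul, zero_mul]
      rw [Finset.sum_ite_eq']
      simp
    have hC : C * C.transpose = 1 := by
      ext i j
      simp [C, Matrix.mul_apply, Matrix.one_apply, he.eq_iff, eq_comm]
    have hBC : ∀ k j, (B * C) k (e j) = B k j := by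
      intro k j
      simp [C, Matrix.mul_apply, he.eq_iff]
    refine ⟨B * C, ?_, ?_, ?_⟩
    · intro k
      induction k using Fin.cases with
      | zero => exact ⟨e ⟨0, by omega⟩, by rw [hBC]; simp [B]⟩
      | succ i => exact ⟨e i, by rw [hBC]; simp [B]⟩
    · intro l
      simp only [Matrix.mul_apply]
      rw [Finset.sum_comm]
      refine Finset.sum_eq_zero fun i _ => ?_
      rw [← Finset.sum_mul, Fin.sum_univ_succ]
      simp [B]
    · apply le_antisymm
      · exact (Matrix.rank_mul_le_right B C).trans C.rank_le_height
      · have h1 : B' * (B * C) * C.transpose = 1 := by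
          rw [← Matrix.mul_assoc, hB, Matrix.one_mul, hC]
        calc n = (1 : Matrix (Fin n) (Fin n) ℝ).rank := by simp [Matrix.rank_one]
          _ = (B' * (B * C) * C.transpose).rank := by rw [h1]
          _ ≤ (B' * (B * C)).rank := Matrix.rank_mul_le_left _ _
          _ ≤ _ := Matrix.rank_mul_le_right _ _
end

section
/- Let K ≥ 2 and L ≥ 1 be integers and let λ > 0. There exists a real K × L matrix A such that (i) every row of A has at least one nonzero entry, (ii) every column of A sums to zero, (iii) the rank of A equals K − 1, and (iv) every row of A has squared Euclidean norm exactly λ², if and only if L ≥ K − 1. -/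
open Finset

def fairM (n m : ℕ) (t a b : ℝ) : Matrix (Fin (n+1)) (Fin (n+m)) ℝ := fun k l =>
  Fin.addCases (motive := fun _ => ℝ)
    (fun i : Fin n => Fin.lastCases (motive := fun _ => ℝ) (-t)
      (fun j : Fin n => b + if j = i then a else 0) k)
    (fun _ : Fin m => 0) l

theorem fairM_last (n m : ℕ) (t a b : ℝ) (i : Fin n) :
    fairM n m t a b (Fin.last n) (Fin.castAdd m i) = -t := by simp [fairM]

theorem fairM_cast (n m : ℕ) (t a b : ℝ) (j i : Fin n) :
    fairM n m t a b j.castSucc (Fin.castAdd m i) = b + if j = i then a else 0 := by simp [fairM]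

theorem fairM_nat (n m : ℕ) (t a b : ℝ) (k : Fin (n+1)) (i : Fin m) :
    fairM n m t a b k (Fin.natAdd n i) = 0 := by simp [fairM]

theorem fairM_col (n m : ℕ) (t a b : ℝ) (h : a + n * b = t) (l : Fin (n+m)) :
    ∑ k, fairM n m t a b k l = 0 := by
  induction l using Fin.addCases with
  | left i =>
    simp only [Fin.sum_univ_castSucc, fairM_last, fairM_cast, sum_add_distrib]
    simp
    linarith
  | right i => simp [fairM_nat]

theorem fairM_rank (n m : ℕ) (t a b : ℝ) (hn : n ≠ 0) (h : a + n * b = t) (ht : t ≠ 0)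
    (ha : a ≠ 0) : (fairM n m t a b).rank = n := by
  rw [← Matrix.rank_transpose]
  have hk : LinearMap.ker (fairM n m t a b).transpose.mulVecLin
      = Submodule.span ℝ {(fun _ => 1 : Fin (n+1) → ℝ)} := by
    ext x
    rw [LinearMap.mem_ker, Submodule.mem_span_singleton]
    constructor
    · intro hx
      have e : ∀ i : Fin n, b * (∑ j : Fin n, x j.castSucc) + a * x i.castSucc
          - t * x (Fin.last n) = 0 := by
        intro i
        have := congrFun hx (Fin.castAdd m i)
        simp only [Matrix.mulVecLin_apply, Matrix.mulVec, dotProduct, Matrix.transpose_apply,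
          Fin.sum_univ_castSucc, fairM_last, fairM_cast, add_mul, sum_add_distrib,
          ← mul_sum, ite_mul, zero_mul, Finset.sum_ite_eq', mem_univ, if_true, Pi.zero_apply] at this
        linarith
      have es := Finset.sum_eq_zero (fun i (_ : i ∈ (univ : Finset (Fin n))) => e i)
      simp only [sum_add_distrib, sum_sub_distrib, ← mul_sum, sum_const, card_univ,
        Fintype.card_fin, nsmul_eq_mul] at es
      have hS : (∑ j : Fin n, x j.castSucc) = n * x (Fin.last n) := by
        apply mul_left_cancel₀ ht
        rw [← h] at es ⊢
        linarith
      refine ⟨x (Fin.last n), ?_⟩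
      ext k
      simp only [Pi.smul_apply, smul_eq_mul, mul_one]
      induction k using Fin.lastCases with
      | last => rfl
      | cast i =>
        have := e i
        rw [hS, ← h] at this
        apply mul_left_cancel₀ ha
        linarith
    · rintro ⟨c, rfl⟩
      rw [map_smul]
      convert smul_zero c
      ext l
      simpa [Matrix.vecMul, dotProduct] using fairM_col n m t a b h l
  have h1 := LinearMap.finrank_range_add_finrank_ker (fairM n m t a b).transpose.mulVecLin
  rw [hk, finrank_span_singleton (by intro h0; simpa using congrFun h0 0)] at h1
  simp at h1
  exact h1

theorem fairM_row (n m : ℕ) (t a b q : ℝ) (h1 : n * t ^ 2 = q)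
    (h2 : a ^ 2 + 2 * a * b + n * b ^ 2 = q) (k : Fin (n+1)) :
    ∑ l, (fairM n m t a b k l) ^ 2 = q := by
  rw [Fin.sum_univ_add]
  induction k using Fin.lastCases with
  | last => simp [fairM_last, fairM_nat, h1]
  | cast j =>
    have : ∀ i : Fin n, (b + if j = i then a else 0) ^ 2
        = b ^ 2 + if j = i then a ^ 2 + 2 * a * b else 0 := by
      intro i; split_ifs <;> ring
    simp only [fairM_cast, fairM_nat, this, sum_add_distrib]
    simp
    linarith

/-- **Existence condition for fair secure generator matrices.**
For integers `K ≥ 2`, `L ≥ 1` and a real `λ > 0`, there exists a real `K × L` matrix `A`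
such that (i) every row has at least one nonzero entry, (ii) every column sums to zero,
(iii) `rank A = K - 1`, and (iv) every row has squared Euclidean norm exactly `λ²`,
if and only if `L ≥ K - 1`. -/
theorem exists_fair_secure_generator_iff (K L : ℕ) (hK : 2 ≤ K) (hL : 1 ≤ L)
    (lam : ℝ) (hlam : 0 < lam) :
    (∃ A : Matrix (Fin K) (Fin L) ℝ,
      (∀ k, ∃ l, A k l ≠ 0) ∧
      (∀ l, ∑ k, A k l = 0) ∧
      A.rank = K - 1 ∧
      (∀ k, ∑ l, (A k l) ^ 2 = lam ^ 2)) ↔ L ≥ K - 1 := by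
  constructor
  · rintro ⟨A, -, -, h, -⟩
    have := A.rank_le_width
    omega
  · intro h
    obtain ⟨n, rfl⟩ : ∃ n, K = n + 1 := ⟨K - 1, by omega⟩
    obtain ⟨m, rfl⟩ : ∃ m, L = n + m := ⟨L - n, by omega⟩
    have hn : n ≠ 0 := by omega
    have hn' : (0 : ℝ) < n := by positivity
    obtain ⟨r, hr, hr2⟩ : ∃ r : ℝ, 0 < r ∧ r ^ 2 = n :=
      ⟨√n, Real.sqrt_pos.2 hn', Real.sq_sqrt hn'.le⟩
    obtain ⟨s, hs, hs2⟩ : ∃ s : ℝ, 0 < s ∧ s ^ 2 = n + 1 :=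
      ⟨√(n + 1), by positivity, Real.sq_sqrt (by positivity)⟩
    have e1 : -(lam / r * s) + n * (lam / r * (1 + s) / n) = lam / r := by
      field_simp; ring
    have e2 : (n : ℝ) * (lam / r) ^ 2 = lam ^ 2 := by
      rw [← hr2]; field_simp
    have e3 : (-(lam / r * s)) ^ 2 + 2 * (-(lam / r * s)) * (lam / r * (1 + s) / n)
        + n * (lam / r * (1 + s) / n) ^ 2 = lam ^ 2 := by
      rw [← e2]
      generalize lam / r = t
      field_simp
      have : (n : ℝ) = s ^ 2 - 1 := by linarith
      rw [this]; ring
    have row := fairM_row n m _ _ _ _ e2 e3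
    refine ⟨fairM n m (lam / r) (-(lam / r * s)) (lam / r * (1 + s) / n), ?_,
      fairM_col n m _ _ _ e1, ?_, row⟩
    · intro k
      by_contra! hc
      have := row k
      simp [hc] at this
      exact (pow_pos hlam 2).ne this
    · rw [fairM_rank n m _ _ _ hn e1 (by positivity) (neg_ne_zero.2 (by positivity))]
      rfl
end

section
/- Let K ≥ 2, let γ be an integer with 1 ≤ γ ≤ K − 1, and let λ > 0. Define A ∈ ℝ^{K×K} by A_{k,k} = −γλ/√(γ² + γ) for every k, A_{k,(k+l) mod K} = λ/√(γ² + γ) for every k and every l ∈ {1,…,γ}, and A_{k,l} = 0 otherwise (row and column indices taken modulo K). Then the rank of A equals K − 1. -/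
open Finset

/-- **Security (rank) of the simplified cyclic construction.**
Let `K ≥ 2`, `1 ≤ γ ≤ K - 1` and `λ > 0`.  Define the `K × K` real matrix `A`
(indices in `ZMod K`) by `A k k = -γλ/√(γ² + γ)`, `A k (k + i) = λ/√(γ² + γ)` for
`i ∈ {1,…,γ}`, and `A k l = 0` otherwise.  Then `rank A = K - 1`. -/
theorem simplified_construction_rank (K : ℕ) [NeZero K] (hK : 2 ≤ K)
    (γ : ℕ) (hγ1 : 1 ≤ γ) (hγ2 : γ ≤ K - 1) (lam : ℝ) (hlam : 0 < lam)
    (A : Matrix (ZMod K) (ZMod K) ℝ)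
    (hdiag : ∀ k : ZMod K, A k k = -((γ : ℝ) * lam) / Real.sqrt ((γ : ℝ) ^ 2 + (γ : ℝ)))
    (hoff : ∀ (k : ZMod K) (i : ℕ), 1 ≤ i → i ≤ γ →
      A k (k + (i : ZMod K)) = lam / Real.sqrt ((γ : ℝ) ^ 2 + (γ : ℝ)))
    (hzero : ∀ k l : ZMod K, l ≠ k → (∀ i : ℕ, 1 ≤ i → i ≤ γ → l ≠ k + (i : ZMod K)) →
      A k l = 0) :
    A.rank = K - 1 := by
  have hγ0 : (0 : ℝ) < γ := by exact_mod_cast hγ1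
  set c : ℝ := lam / Real.sqrt ((γ : ℝ) ^ 2 + (γ : ℝ)) with hc
  have hcpos : 0 < c := by positivity
  have hmul : ∀ (v : ZMod K → ℝ) (k : ZMod K),
      A.mulVec v k = c * ∑ i ∈ Finset.range γ, (v (k + ((i + 1 : ℕ) : ZMod K)) - v k) := by
    intro v k
    have hinj : Set.InjOn (fun i : ℕ => k + (i : ZMod K)) (Finset.range (γ + 1) : Finset ℕ) := by
      intro a ha b hb hab
      simp only [Finset.coe_range, Set.mem_Iio] at ha hb
      have h1 : (a : ZMod K) = b := add_left_cancel hab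
      rw [ZMod.natCast_eq_natCast_iff] at h1
      exact Nat.ModEq.eq_of_lt_of_lt h1 (by omega) (by omega)
    have hsub : ∑ l ∈ (Finset.range (γ + 1)).image (fun i : ℕ => k + (i : ZMod K)), A k l * v l
        = ∑ l, A k l * v l := by
      apply Finset.sum_subset (Finset.subset_univ _)
      intro l _ hl
      rw [hzero k l, zero_mul]
      · rintro rfl
        exact hl (Finset.mem_image.2 ⟨0, by simp, by simp⟩)
      · rintro i h1 h2 rfl
        exact hl (Finset.mem_image.2 ⟨i, by simp; omega, rfl⟩)
    change ∑ l, A k l * v l = _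
    rw [← hsub, Finset.sum_image hinj, Finset.sum_range_succ']
    have hs : ∑ i ∈ Finset.range γ, A k (k + ((i + 1 : ℕ) : ZMod K)) * v (k + ((i + 1 : ℕ) : ZMod K))
        = ∑ i ∈ Finset.range γ, c * v (k + ((i + 1 : ℕ) : ZMod K)) := by
      apply Finset.sum_congr rfl
      intro i hi
      have := Finset.mem_range.1 hi
      rw [hoff k (i + 1) (by omega) (by omega)]
    rw [hs, Finset.sum_sub_distrib, ← Finset.mul_sum, Nat.cast_zero, add_zero, hdiag]
    simp only [Finset.sum_const, Finset.card_range, nsmul_eq_mul]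
    rw [hc]
    ring
  have hker : LinearMap.ker A.mulVecLin = Submodule.span ℝ {(fun _ => 1 : ZMod K → ℝ)} := by
    ext v
    rw [LinearMap.mem_ker, Matrix.mulVecLin_apply, Submodule.mem_span_singleton]
    constructor
    · intro hv
      obtain ⟨m, hm⟩ := Finite.exists_max v
      have hstep : ∀ k, v k = v m → v (k + 1) = v m := by
        intro k hk
        have h0 := hmul v k
        rw [hv] at h0
        have h1 : ∑ i ∈ Finset.range γ, (v (k + ((i + 1 : ℕ) : ZMod K)) - v k) = 0 := by
          have h2 := h0.symm
          simp only [Pi.zero_apply, mul_eq_zero] at h2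
          exact h2.resolve_left hcpos.ne'
        rw [Finset.sum_eq_zero_iff_of_nonpos] at h1
        · have h2 := h1 0 (Finset.mem_range.2 (by omega))
          simp only [zero_add, Nat.cast_one] at h2
          linarith
        · intro i _
          have := hm (k + ((i + 1 : ℕ) : ZMod K))
          linarith
      have hall : ∀ n : ℕ, v (m + (n : ZMod K)) = v m := by
        intro n
        induction n with
        | zero => simp
        | succ n ih =>
          have := hstep _ ih
          rwa [Nat.cast_succ, ← add_assoc]
      refine ⟨v m, ?_⟩
      funext x
      have := hall (x - m).val
      rw [ZMod.natCast_zmod_val, add_sub_cancel] at this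
      simp [this]
    · rintro ⟨a, rfl⟩
      funext k
      rw [hmul]
      simp
  have hfin : Module.finrank ℝ (LinearMap.ker A.mulVecLin) = 1 := by
    rw [hker]
    apply finrank_span_singleton
    intro h
    exact one_ne_zero (congrFun h 0)
  have hrn := LinearMap.finrank_range_add_finrank_ker A.mulVecLin
  rw [hfin, Module.finrank_fintype_fun_eq_card, ZMod.card] at hrn
  unfold Matrix.rank
  omega
end

section
/- Let v ≥ 0 be a natural number and define functions f_n on the open interval (−1, 1) recursively by f_0(z) = z/(1 − z) and f_{n+1}(z) = z · f_n'(z). Then for every z with |z| < 1, the series ∑_{k=1}^∞ k^v z^k converges absolutely and ∑_{k=1}^∞ k^v z^k = f_v(z); that is, the polylogarithm Li_{−v}(z) of negative integer order equals the v-fold application of the operator z·d/dz to z/(1 − z). -/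
/-- The `v`-fold application of the operator `z·d/dz` to the function `z ↦ z/(1 - z)`:
`fIter 0 z = z/(1 - z)` and `fIter (n+1) z = z * (fIter n)'(z)`. -/
noncomputable def fIter : ℕ → ℝ → ℝ
  | 0 => fun z => z / (1 - z)
  | n + 1 => fun z => z * deriv (fIter n) z

theorem polylog_aux_summable (v : ℕ) (z : ℝ) (hz : |z| < 1) :
    Summable (fun k : ℕ => ((k : ℝ) + 1) ^ v * z ^ (k + 1)) := by
  have h := (summable_nat_add_iff 1).2
    (summable_pow_mul_geometric_of_norm_lt_one (R := ℝ) v (r := z) (by simpa using hz))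
  simpa using h

theorem polylog_aux_deriv (v : ℕ) (z : ℝ) (hz : |z| < 1) :
    HasDerivAt (fun y : ℝ => ∑' k : ℕ, ((k : ℝ) + 1) ^ v * y ^ (k + 1))
      (∑' k : ℕ, ((k : ℝ) + 1) ^ (v + 1) * z ^ k) z := by
  obtain ⟨r, hr1, hr2⟩ := exists_between hz
  have hr0 : 0 < r := lt_of_le_of_lt (abs_nonneg z) hr1
  have hu : Summable (fun k : ℕ => ((k : ℝ) + 1) ^ (v + 1) * r ^ k) := by
    have h := (polylog_aux_summable (v + 1) r (by rwa [abs_of_pos hr0])).mul_right r⁻¹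
    refine h.congr fun k => ?_
    field_simp
    ring
  refine hasDerivAt_tsum_of_isPreconnected (t := Set.Ioo (-r) r) (y₀ := z)
    (g := fun (k : ℕ) (y : ℝ) => ((k : ℝ) + 1) ^ v * y ^ (k + 1))
    (g' := fun (k : ℕ) (y : ℝ) => ((k : ℝ) + 1) ^ (v + 1) * y ^ k)
    hu isOpen_Ioo isPreconnected_Ioo ?_ ?_ (abs_lt.1 hr1)
    (polylog_aux_summable v z hz) (abs_lt.1 hr1)
  · intro k y _
    have h := (hasDerivAt_pow (k + 1) y).const_mul (((k : ℝ) + 1) ^ v)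
    have e : ((k : ℝ) + 1) ^ v * (((k + 1 : ℕ) : ℝ) * y ^ (k + 1 - 1)) =
        ((k : ℝ) + 1) ^ (v + 1) * y ^ k := by
      rw [Nat.add_sub_cancel]
      push_cast
      ring
    rw [e] at h
    exact h
  · intro k y hy
    have hy' : |y| ≤ r := (abs_lt.2 hy).le
    rw [norm_mul, norm_pow, norm_pow, Real.norm_eq_abs, Real.norm_eq_abs,
      abs_of_nonneg (by positivity : (0 : ℝ) ≤ (k : ℝ) + 1)]
    gcongr

theorem polylog_aux_eq (v : ℕ) : ∀ z : ℝ, |z| < 1 →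
    ∑' k : ℕ, ((k : ℝ) + 1) ^ v * z ^ (k + 1) = fIter v z := by
  induction v with
  | zero =>
    intro z hz
    simp only [pow_zero, one_mul, fIter, pow_succ]
    rw [tsum_mul_right, tsum_geometric_of_abs_lt_one hz]
    ring
  | succ n ih =>
    intro z hz
    have he : (fun y : ℝ => ∑' k : ℕ, ((k : ℝ) + 1) ^ n * y ^ (k + 1)) =ᶠ[nhds z] fIter n := by
      filter_upwards [(isOpen_lt continuous_abs continuous_const).mem_nhds hz] with y hy
      exact ih y hy
    show _ = z * deriv (fIter n) z
    rw [← he.deriv_eq, (polylog_aux_deriv n z hz).deriv, ← tsum_mul_left]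
    refine tsum_congr fun k => ?_
    ring

/-- **Polylogarithm of negative integer order.**
For every natural number `v` and every real `z` with `|z| < 1`, the series
`∑_{k=1}^∞ k^v z^k` converges absolutely and
`Li_{-v}(z) = ∑_{k=1}^∞ k^v z^k = (z·d/dz)^v (z/(1 - z))`. -/
theorem polylog_neg_int_order (v : ℕ) (z : ℝ) (hz : |z| < 1) :
    Summable (fun k : ℕ => |((k : ℝ) + 1) ^ v * z ^ (k + 1)|) ∧
    ∑' k : ℕ, ((k : ℝ) + 1) ^ v * z ^ (k + 1) = fIter v z := by
  exact ⟨(polylog_aux_summable v z hz).abs, polylog_aux_eq v z hz⟩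
end
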